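/- For the circular-chain matrix S with 12MG - 9γ² ≠ 0, the nonzero eigenvalues λ₂ and λ₃ are semi-simple: each has geometric multiplicity equal to its algebraic multiplicity 2; whereas the zero eigenvalue λ₁ = 0 is defective (geometric multiplicity 1, algebraic multiplicity 2). -/

import Mathlib

open Polynomial

/-- The system matrix of the three-mass circular chain. -/
noncomputable def Smat (G M γ : ℝ) : Matrix (Fin 6) (Fin 6) ℂ :=
  !![0, 0, 0, 1/(M:ℂ), 0, 0;
     0, 0, 0, 0, 1/(M:ℂ), 0;
     0, 0, 0, 0, 0, 1/(M:ℂ);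
     -2*(G:ℂ), (G:ℂ), (G:ℂ), -2*(γ:ℂ)/(M:ℂ), (γ:ℂ)/(M:ℂ), (γ:ℂ)/(M:ℂ);
     (G:ℂ), -2*(G:ℂ), (G:ℂ), (γ:ℂ)/(M:ℂ), -2*(γ:ℂ)/(M:ℂ), (γ:ℂ)/(M:ℂ);
     (G:ℂ), (G:ℂ), -2*(G:ℂ), (γ:ℂ)/(M:ℂ), (γ:ℂ)/(M:ℂ), -2*(γ:ℂ)/(M:ℂ)]

noncomputable def lam2 (G M γ : ℝ) : ℂ :=
  (-3*(γ:ℂ) - Complex.I * (((12*M*G - 9*γ^2 : ℝ) : ℂ) ^ ((1:ℂ)/2))) / (2*(M:ℂ))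

noncomputable def lam3 (G M γ : ℝ) : ℂ :=
  (-3*(γ:ℂ) + Complex.I * (((12*M*G - 9*γ^2 : ℝ) : ℂ) ^ ((1:ℂ)/2))) / (2*(M:ℂ))

/-- Geometric multiplicity of an eigenvalue `μ` of `S`. -/
noncomputable def geomMult (G M γ : ℝ) (μ : ℂ) : ℕ :=
  Module.finrank ℂ
    (LinearMap.ker (Matrix.toLin' (μ • (1 : Matrix (Fin 6) (Fin 6) ℂ) - Smat G M γ)))

/-!
A state of the oscillators that moves as `exp (x * t)` is determined by its positions `u`, which
must satisfy `(x ^ 2 + (b * x + a * g) • L) u = 0`. Hence the eigenspaces of the first-order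
system are copies of eigenspaces of the coupling matrix `L`, and its characteristic polynomial is
`det (X ^ 2 + (b * X + a * g) • L)`.

The Laplacian of the complete graph on `n` vertices has only the eigenvalues `0`, on constant
vectors, and `n`, on the `(n - 1)`-dimensional space of vectors with coordinate sum zero. The latter
gives the two roots of `x ^ 2 + n * b * x + n * a * g`, each of both multiplicities `n - 1`, while
the constant vectors give the factor `X ^ 2` but only a line of eigenvectors. The circular chain
of three masses is the case `n = 3`.
-/

open Matrix Module Module.End

section OscillatorMatrix

variable {R K V : Type*} [CommRing R] [Field K]

/-- The first-order system `u' = a • w`, `w' = -(g • L u) - b • L w` of oscillators whose positions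
`u` and momenta `w` are indexed by `V` and coupled through `L`: `a` is the inverse mass, `g` the
stiffness and `b` the damping divided by the mass. -/
def oscillatorMatrix [DecidableEq V] (a g b : R) (L : Matrix V V R) : Matrix (V ⊕ V) (V ⊕ V) R :=
  fromBlocks 0 (a • 1) (-(g • L)) (-(b • L))

/-- The state of `oscillatorMatrix a g b L` with positions `u` that moves as `exp (x * t)`;
its momenta are `(x / a) • u` since `u' = a • w`. -/
def modeState (a x : K) : (V → K) →ₗ[K] (V ⊕ V → K) :=
  (LinearEquiv.sumArrowLequivProdArrow V V K K).symm ∘ₗ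
    LinearMap.prod LinearMap.id ((x / a) • LinearMap.id)

lemma modeState_apply (a x : K) (u : V → K) : modeState a x u = Sum.elim u ((x / a) • u) := by
  ext (i | i) <;> rfl

lemma modeState_injective (a x : K) : Function.Injective (modeState a x : (V → K) →ₗ[K] _) := by
  intro u u' h
  rw [modeState_apply, modeState_apply] at h
  exact (Sum.elim_eq_iff.mp h).1

variable [Fintype V] [DecidableEq V]

lemma sumElim_mem_eigenspace_oscillatorMatrix_iff {a g b x : K} {L : Matrix V V K}
    {u w : V → K} :
    Sum.elim u w ∈ eigenspace (toLin' (oscillatorMatrix a g b L)) x ↔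
      a • w = x • u ∧ -(g • (L *ᵥ u)) - b • (L *ᵥ w) = x • w := by
  have smul_elim : x • Sum.elim u w = Sum.elim (x • u) (x • w) := by ext (i | i) <;> rfl
  rw [mem_eigenspace_iff, toLin'_apply, oscillatorMatrix, fromBlocks_mulVec, smul_elim,
    Sum.elim_eq_iff]
  simp only [Sum.elim_comp_inl, Sum.elim_comp_inr, zero_mulVec, zero_add, smul_mulVec,
    one_mulVec, neg_mulVec, sub_eq_add_neg]

lemma modeState_mem_eigenspace_oscillatorMatrix_iff {a g b x μ : K} {L : Matrix V V K}
    (ha : a ≠ 0) (hd : b * x + a * g ≠ 0) (hx : x ^ 2 + (b * x + a * g) * μ = 0) {u : V → K} :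
    modeState a x u ∈ eigenspace (toLin' (oscillatorMatrix a g b L)) x ↔
      u ∈ eigenspace (toLin' L) μ := by
  have position_eq : a • (x / a) • u = x • u := by rw [smul_smul, mul_div_cancel₀ _ ha]
  have momentum_residual : -(g • (L *ᵥ u)) - b • (L *ᵥ ((x / a) • u)) - x • (x / a) • u =
      (-(b * x + a * g) / a) • (L *ᵥ u - μ • u) := by
    ext i
    simp only [mulVec_smul, Pi.sub_apply, Pi.neg_apply, Pi.smul_apply, smul_eq_mul]
    field_simp
    linear_combination -(u i) * hx
  rw [modeState_apply, sumElim_mem_eigenspace_oscillatorMatrix_iff, and_iff_right position_eq,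
    ← sub_eq_zero, momentum_residual, smul_eq_zero_iff_right (div_ne_zero (neg_ne_zero.mpr hd) ha),
    sub_eq_zero, mem_eigenspace_iff, toLin'_apply]

lemma eigenspace_oscillatorMatrix {a g b x μ : K} {L : Matrix V V K}
    (ha : a ≠ 0) (hd : b * x + a * g ≠ 0) (hx : x ^ 2 + (b * x + a * g) * μ = 0) :
    eigenspace (toLin' (oscillatorMatrix a g b L)) x =
      (eigenspace (toLin' L) μ).map (modeState a x) := by
  ext v
  constructor
  · intro hv
    obtain ⟨u, w, rfl⟩ : ∃ u w, v = Sum.elim u w := ⟨_, _, (Sum.elim_comp_inl_inr v).symm⟩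
    have hw : w = (x / a) • u := by
      rw [div_eq_inv_mul, mul_smul,
        ← (sumElim_mem_eigenspace_oscillatorMatrix_iff.mp hv).1, inv_smul_smul₀ ha]
    rw [hw, ← modeState_apply] at hv ⊢
    exact ⟨u, (modeState_mem_eigenspace_oscillatorMatrix_iff ha hd hx).mp hv, rfl⟩
  · rintro ⟨u, hu, rfl⟩
    exact (modeState_mem_eigenspace_oscillatorMatrix_iff ha hd hx).mpr hu

lemma finrank_eigenspace_oscillatorMatrix {a g b x μ : K} {L : Matrix V V K}
    (ha : a ≠ 0) (hd : b * x + a * g ≠ 0) (hx : x ^ 2 + (b * x + a * g) * μ = 0) :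
    finrank K (eigenspace (toLin' (oscillatorMatrix a g b L)) x) =
      finrank K (eigenspace (toLin' L) μ) := by
  rw [eigenspace_oscillatorMatrix ha hd hx]
  exact (Submodule.equivMapOfInjective _ (modeState_injective a x) _).finrank_eq.symm

lemma charpoly_oscillatorMatrix (a g b : R) (L : Matrix V V R) :
    (oscillatorMatrix a g b L).charpoly =
      det ((X ^ 2 : R[X]) • (1 : Matrix V V R[X]) + (C b * X + C (a * g)) • L.map C) := by
  set P := (X ^ 2 : R[X]) • (1 : Matrix V V R[X]) + (C b * X + C (a * g)) • L.map C with hP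
  have charmatrix_eq : charmatrix (oscillatorMatrix a g b L) =
      fromBlocks ((X : R[X]) • 1) (-(C a • 1)) (C g • L.map C)
        ((X : R[X]) • 1 + C b • L.map C) := by
    ext (i | i) (j | j) : 1 <;>
      simp [oscillatorMatrix, charmatrix_apply, diagonal_apply, Matrix.one_apply,
        apply_ite (C : R → R[X])]
  -- Column elimination clears the upper right block at the cost of a factor `det (X • 1)`.
  have elimination : charmatrix (oscillatorMatrix a g b L) *
      fromBlocks 1 (C a • 1) 0 ((X : R[X]) • 1) =
        fromBlocks ((X : R[X]) • 1) 0 (C g • L.map C) P := by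
    rw [charmatrix_eq, fromBlocks_multiply, hP]
    congr 1
    · simp
    · rw [Matrix.neg_mul, smul_mul_smul_comm, smul_mul_smul_comm, mul_comm X, add_neg_cancel]
    · simp
    · rw [C_mul, Matrix.mul_smul, Matrix.mul_one, Matrix.mul_smul, Matrix.mul_one]
      module
  have det_eq := congrArg det elimination
  rw [det_mul, det_fromBlocks_zero₂₁, det_fromBlocks_zero₁₂, det_one, one_mul, mul_comm] at det_eq
  have regular_det : IsLeftRegular (det ((X : R[X]) • (1 : Matrix V V R[X]))) := by
    rw [det_smul, det_one, mul_one]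
    exact (isRegular_X (R := R)).left.pow _
  exact regular_det det_eq

end OscillatorMatrix

lemma nonempty_of_cast_card_ne_zero {K V : Type*} [AddMonoidWithOne K] [Fintype V]
    (hV : (Fintype.card V : K) ≠ 0) : Nonempty V := by
  by_contra! h
  exact hV (by rw [Fintype.card_eq_zero, Nat.cast_zero])

section CompleteGraph

variable (R : Type*) {K V : Type*} [CommRing R] [Field K] [Fintype V] [DecidableEq V]

lemma lapMatrix_top : (⊤ : SimpleGraph V).lapMatrix R =
    (Fintype.card V : R) • 1 - of 1 := by
  ext i j
  have card_pos : 1 ≤ Fintype.card V := Fintype.card_pos_iff.mpr ⟨i⟩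
  rcases eq_or_ne i j with rfl | hij
  · simp [SimpleGraph.lapMatrix, SimpleGraph.degMatrix, Nat.cast_sub card_pos]
  · simp [SimpleGraph.lapMatrix, SimpleGraph.degMatrix, hij]

lemma lapMatrix_top_mulVec (u : V → R) : (⊤ : SimpleGraph V).lapMatrix R *ᵥ u =
    (Fintype.card V : R) • u - fun _ ↦ ∑ i, u i := by
  ext i
  have all_ones_mulVec : ((of 1 : Matrix V V R) *ᵥ u) i = ∑ j, u j := by simp [mulVec, dotProduct]
  rw [lapMatrix_top, sub_mulVec, smul_mulVec, one_mulVec, Pi.sub_apply, all_ones_mulVec]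
  rfl

variable {R}

lemma det_smul_one_add_smul_lapMatrix_top [Nonempty V] (c d : R) :
    det (c • 1 + d • (⊤ : SimpleGraph V).lapMatrix R) =
      c * (c + Fintype.card V * d) ^ (Fintype.card V - 1) := by
  obtain ⟨k, hk⟩ := Nat.exists_eq_add_one_of_ne_zero (Fintype.card_ne_zero (α := V))
  have rank_one : c • 1 + d • (⊤ : SimpleGraph V).lapMatrix R =
      scalar V (c + Fintype.card V * d) - vecMulVec (fun _ ↦ d) 1 := by
    have vecMulVec_eq : vecMulVec (fun _ : V ↦ d) (1 : V → R) = d • of 1 := by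
      ext i j
      simp [vecMulVec_apply]
    rw [lapMatrix_top, vecMulVec_eq, scalar_apply, ← smul_one_eq_diagonal]
    module
  have trace_eq : (fun _ : V ↦ d) ⬝ᵥ 1 = Fintype.card V * d := by simp [dotProduct]
  rw [rank_one, ← eval_charpoly, charpoly_vecMulVec, trace_eq, hk, Nat.add_sub_cancel]
  simp only [eval_sub, eval_smul, eval_pow, eval_X, smul_eq_mul]
  ring

lemma finrank_eigenspace_lapMatrix_top_zero (hV : (Fintype.card V : K) ≠ 0) :
    finrank K (eigenspace (toLin' ((⊤ : SimpleGraph V).lapMatrix K)) 0) = 1 := by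
  have : Nonempty V := nonempty_of_cast_card_ne_zero hV
  have eigenspace_eq : eigenspace (toLin' ((⊤ : SimpleGraph V).lapMatrix K)) 0 =
      Submodule.span K {(1 : V → K)} := by
    ext u
    rw [mem_eigenspace_iff, toLin'_apply, lapMatrix_top_mulVec, zero_smul, sub_eq_zero,
      Submodule.mem_span_singleton]
    constructor
    · intro h
      refine ⟨(Fintype.card V : K)⁻¹ * ∑ i, u i, funext fun i ↦ ?_⟩
      have hi : (Fintype.card V : K) * u i = ∑ j, u j := congrFun h i
      simp [← hi, hV]
    · rintro ⟨c, rfl⟩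
      ext i
      simp
  rw [eigenspace_eq, finrank_span_singleton one_ne_zero]

lemma finrank_eigenspace_lapMatrix_top_card [Nonempty V] :
    finrank K (eigenspace (toLin' ((⊤ : SimpleGraph V).lapMatrix K)) (Fintype.card V : K)) =
      Fintype.card V - 1 := by
  let coordSum : Dual K (V → K) := ∑ i, LinearMap.proj i
  have coordSum_apply (u : V → K) : coordSum u = ∑ i, u i := by simp [coordSum]
  have coordSum_ne_zero : coordSum ≠ 0 := by
    intro h
    simpa [coordSum_apply] using
      LinearMap.congr_fun h (Pi.single (Classical.arbitrary V) (1 : K))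
  have eigenspace_eq : eigenspace (toLin' ((⊤ : SimpleGraph V).lapMatrix K)) (Fintype.card V : K) =
      LinearMap.ker coordSum := by
    ext u
    simp [lapMatrix_top_mulVec, coordSum_apply, funext_iff]
  have finrank_ker := Dual.finrank_ker_add_one_of_ne_zero coordSum_ne_zero
  rw [finrank_fintype_fun_eq_card] at finrank_ker
  rw [eigenspace_eq]
  omega

end CompleteGraph

lemma rootMultiplicity_X_sub_C_pow_mul {R : Type*} [CommRing R] [IsDomain R] {x : R} {r : R[X]}
    (h : r.eval x ≠ 0) (k : ℕ) : ((X - C x) ^ k * r).rootMultiplicity x = k := by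
  have hr : r ≠ 0 := by
    rintro rfl
    exact h eval_zero
  rw [mul_comm, rootMultiplicity_mul_X_sub_C_pow hr, rootMultiplicity_eq_zero h, zero_add]

section CompleteOscillator

variable {R K V : Type*} [CommRing R] [Field K] [Fintype V] [DecidableEq V] {a g b p q : K}

variable (V) in
/-- The `oscillatorMatrix` of identical oscillators indexed by `V`, any two of which are coupled. -/
def completeOscillatorMatrix (a g b : R) : Matrix (V ⊕ V) (V ⊕ V) R :=
  oscillatorMatrix a g b ((⊤ : SimpleGraph V).lapMatrix R)

lemma charpoly_completeOscillatorMatrix [Nonempty V] (a g b : R) :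
    (completeOscillatorMatrix V a g b).charpoly =
      X ^ 2 * (X ^ 2 + C (Fintype.card V * b) * X + C (Fintype.card V * (a * g))) ^
        (Fintype.card V - 1) := by
  have map_lapMatrix : ((⊤ : SimpleGraph V).lapMatrix R).map C =
      (⊤ : SimpleGraph V).lapMatrix R[X] := by
    ext1 i j
    simp [lapMatrix_top, Matrix.one_apply, apply_ite C]
  rw [completeOscillatorMatrix, charpoly_oscillatorMatrix, map_lapMatrix,
    det_smul_one_add_smul_lapMatrix_top]
  simp only [C_mul, map_natCast]
  ring

lemma finrank_eigenspace_completeOscillatorMatrix_zero (ha : a ≠ 0) (hg : g ≠ 0)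
    (hV : (Fintype.card V : K) ≠ 0) :
    finrank K (eigenspace (toLin' (completeOscillatorMatrix V a g b)) 0) = 1 := by
  rw [completeOscillatorMatrix,
    finrank_eigenspace_oscillatorMatrix (μ := 0) ha (by simp [ha, hg]) (by simp),
    finrank_eigenspace_lapMatrix_top_zero hV]

lemma rootMultiplicity_zero_charpoly_completeOscillatorMatrix
    (hV : (Fintype.card V : K) ≠ 0) (ha : a ≠ 0) (hg : g ≠ 0) :
    (completeOscillatorMatrix V a g b).charpoly.rootMultiplicity 0 = 2 := by
  have : Nonempty V := nonempty_of_cast_card_ne_zero hV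
  have eval_ne_zero : eval 0 ((X ^ 2 + C (Fintype.card V * b) * X + C (Fintype.card V * (a * g))) ^
      (Fintype.card V - 1)) ≠ 0 := by
    simp [hV, ha, hg]
  have multiplicity := rootMultiplicity_X_sub_C_pow_mul eval_ne_zero 2
  rwa [C_0, sub_zero, ← charpoly_completeOscillatorMatrix] at multiplicity

lemma finrank_eigenspace_completeOscillatorMatrix [Nonempty V] (ha : a ≠ 0) (hp : p ≠ 0)
    (hroot : p ^ 2 + (b * p + a * g) * Fintype.card V = 0) :
    finrank K (eigenspace (toLin' (completeOscillatorMatrix V a g b)) p) =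
      Fintype.card V - 1 := by
  have hd : b * p + a * g ≠ 0 := by
    intro hd
    simp [hd, hp] at hroot
  rw [completeOscillatorMatrix, finrank_eigenspace_oscillatorMatrix ha hd hroot,
    finrank_eigenspace_lapMatrix_top_card]

lemma rootMultiplicity_charpoly_completeOscillatorMatrix [Nonempty V] (hp : p ≠ 0) (hpq : p ≠ q)
    (hsum : p + q = -(Fintype.card V * b)) (hprod : p * q = Fintype.card V * (a * g)) :
    (completeOscillatorMatrix V a g b).charpoly.rootMultiplicity p = Fintype.card V - 1 := by
  have quadratic_eq : X ^ 2 + C (Fintype.card V * b) * X + C (Fintype.card V * (a * g)) =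
      (X - C p) * (X - C q) := by
    rw [← hprod, ← neg_eq_iff_eq_neg.mpr hsum, C_neg, C_add, C_mul]
    ring
  rw [charpoly_completeOscillatorMatrix, quadratic_eq, mul_pow, mul_left_comm]
  exact rootMultiplicity_X_sub_C_pow_mul (by simp [sub_eq_zero, hp, hpq]) _

theorem stmt5_general (ha : a ≠ 0) (hg : g ≠ 0) (hV : (Fintype.card V : K) ≠ 0)
    (hsum : p + q = -(Fintype.card V * b)) (hprod : p * q = Fintype.card V * (a * g))
    (hpq : p ≠ q) :
    let S := completeOscillatorMatrix V a g b
    (finrank K (eigenspace (toLin' S) p) = Fintype.card V - 1 ∧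
      S.charpoly.rootMultiplicity p = Fintype.card V - 1) ∧
    (finrank K (eigenspace (toLin' S) q) = Fintype.card V - 1 ∧
      S.charpoly.rootMultiplicity q = Fintype.card V - 1) ∧
    (finrank K (eigenspace (toLin' S) 0) = 1 ∧ S.charpoly.rootMultiplicity 0 = 2) := by
  have : Nonempty V := nonempty_of_cast_card_ne_zero hV
  have hpq_ne_zero : p * q ≠ 0 := hprod ▸ mul_ne_zero hV (mul_ne_zero ha hg)
  have hp : p ≠ 0 := left_ne_zero_of_mul hpq_ne_zero
  have hq : q ≠ 0 := right_ne_zero_of_mul hpq_ne_zero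
  exact
    ⟨⟨finrank_eigenspace_completeOscillatorMatrix ha hp
        (by linear_combination p * hsum - hprod),
      rootMultiplicity_charpoly_completeOscillatorMatrix hp hpq hsum hprod⟩,
    ⟨finrank_eigenspace_completeOscillatorMatrix ha hq
        (by linear_combination q * hsum - hprod),
      rootMultiplicity_charpoly_completeOscillatorMatrix hq hpq.symm
        (by rw [add_comm, hsum]) (by rw [mul_comm, hprod])⟩,
    finrank_eigenspace_completeOscillatorMatrix_zero ha hg hV,
    rootMultiplicity_zero_charpoly_completeOscillatorMatrix hV ha hg⟩

end CompleteOscillator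

lemma finrank_eigenspace_toLin'_reindex {K m n : Type*} [Field K] [Fintype m] [DecidableEq m]
    [Fintype n] [DecidableEq n] (e : m ≃ n) (A : Matrix m m K) (x : K) :
    finrank K (eigenspace (toLin' (reindex e e A)) x) = finrank K (eigenspace (toLin' A) x) := by
  have eigenspace_eq : eigenspace (toLin' A) x =
      (eigenspace (toLin' (reindex e e A)) x).map (LinearEquiv.funCongrLeft K K e).toLinearMap := by
    ext v
    have symm_apply : (LinearEquiv.funCongrLeft K K e).symm v = v ∘ e.symm := rfl
    rw [Submodule.mem_map_equiv, mem_eigenspace_iff, mem_eigenspace_iff, toLin'_apply,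
      toLin'_apply, symm_apply, reindex_apply, submatrix_mulVec_equiv, Equiv.symm_symm,
      Function.comp_assoc, Equiv.symm_comp_self, Function.comp_id]
    exact e.symm.surjective.injective_comp_right.eq_iff.symm
  rw [eigenspace_eq, LinearEquiv.finrank_map_eq]

section CircularChain

variable (G M γ : ℝ)

/-- The three-mass circular chain as a `completeOscillatorMatrix`; the 3-cycle is the complete
graph on its vertices. -/
noncomputable def chainMatrix : Matrix (Fin 3 ⊕ Fin 3) (Fin 3 ⊕ Fin 3) ℂ :=
  completeOscillatorMatrix (Fin 3) (1 / M) G (γ / M)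

lemma Smat_eq_reindex : Smat G M γ = reindex finSumFinEquiv finSumFinEquiv (chainMatrix G M γ) := by
  have index_eq : (finSumFinEquiv : Fin 3 ⊕ Fin 3 → Fin 6) = Sum.elim ![0, 1, 2] ![3, 4, 5] := by
    ext (i | i) <;> fin_cases i <;> rfl
  rw [← Equiv.symm_apply_eq, reindex_symm, reindex_apply, Equiv.symm_symm, index_eq]
  ext (i | i) (j | j) <;> fin_cases i <;> fin_cases j <;>
    simp [Smat, chainMatrix, completeOscillatorMatrix, oscillatorMatrix, lapMatrix_top] <;> ring

lemma charpoly_Smat : (Smat G M γ).charpoly = (chainMatrix G M γ).charpoly := by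
  rw [Smat_eq_reindex, charpoly_reindex]

lemma geomMult_eq_finrank_eigenspace (x : ℂ) :
    geomMult G M γ x = finrank ℂ (eigenspace (toLin' (chainMatrix G M γ)) x) := by
  have ker_eq : LinearMap.ker (toLin' (x • (1 : Matrix (Fin 6) (Fin 6) ℂ) - Smat G M γ)) =
      eigenspace (toLin' (Smat G M γ)) x := by
    ext v
    simp [sub_eq_zero, eq_comm]
  rw [geomMult, ker_eq, Smat_eq_reindex]
  exact finrank_eigenspace_toLin'_reindex _ _ x

lemma lam2_add_lam3 : lam2 G M γ + lam3 G M γ = -(3 * (γ / M)) := by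
  rw [lam2, lam3]
  ring

variable {M}

lemma lam2_mul_lam3 (hM : M ≠ 0) : lam2 G M γ * lam3 G M γ = 3 * (1 / M * G) := by
  have hM' : (M : ℂ) ≠ 0 := Complex.ofReal_ne_zero.mpr hM
  have discr_root_sq : (((12 * M * G - 9 * γ ^ 2 : ℝ) : ℂ) ^ ((1 : ℂ) / 2)) ^ 2 =
      (12 * M * G - 9 * γ ^ 2 : ℝ) := by
    simp only [one_div, Complex.cpow_ofNat_inv_pow]
  rw [lam2, lam3]
  generalize ((12 * M * G - 9 * γ ^ 2 : ℝ) : ℂ) ^ ((1 : ℂ) / 2) = r at *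
  push_cast at discr_root_sq
  field_simp
  linear_combination discr_root_sq - r ^ 2 * Complex.I_sq

variable {G γ}

lemma lam2_ne_lam3 (hM : M ≠ 0) (h : 12 * M * G - 9 * γ ^ 2 ≠ 0) :
    lam2 G M γ ≠ lam3 G M γ := by
  have hM' : (M : ℂ) ≠ 0 := Complex.ofReal_ne_zero.mpr hM
  have discr_root_ne_zero : ((12 * M * G - 9 * γ ^ 2 : ℝ) : ℂ) ^ ((1 : ℂ) / 2) ≠ 0 := by
    rw [Ne, Complex.cpow_eq_zero_iff, Complex.ofReal_eq_zero]
    exact fun hzero ↦ h hzero.1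
  have sub_eq : lam3 G M γ - lam2 G M γ =
      Complex.I * ((12 * M * G - 9 * γ ^ 2 : ℝ) : ℂ) ^ ((1 : ℂ) / 2) / M := by
    rw [lam2, lam3]
    ring
  refine (sub_ne_zero.mp ?_).symm
  rw [sub_eq]
  exact div_ne_zero (mul_ne_zero Complex.I_ne_zero discr_root_ne_zero) hM'

end CircularChain

/-- λ₂ and λ₃ are semi-simple (geometric = algebraic multiplicity = 2),
while the zero eigenvalue is defective (geometric 1, algebraic 2). -/
theorem stmt5 (G M γ : ℝ) (hG : 0 < G) (hM : 0 < M) (hγ : 0 < γ)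
    (h : 12*M*G - 9*γ^2 ≠ 0) :
    (geomMult G M γ (lam2 G M γ) = 2 ∧
      (Smat G M γ).charpoly.rootMultiplicity (lam2 G M γ) = 2) ∧
    (geomMult G M γ (lam3 G M γ) = 2 ∧
      (Smat G M γ).charpoly.rootMultiplicity (lam3 G M γ) = 2) ∧
    (geomMult G M γ 0 = 1 ∧ (Smat G M γ).charpoly.rootMultiplicity 0 = 2) := by
  simp only [geomMult_eq_finrank_eigenspace, charpoly_Smat]
  exact stmt5_general (by simp [hM.ne']) (by simp [hG.ne']) (by simp)
    (by simpa using lam2_add_lam3 G M γ) (by simpa using lam2_mul_lam3 G γ hM.ne')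
    (lam2_ne_lam3 hM.ne' h)
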